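/- Assume R is positive definite and Q − SᵀR⁻¹S is positive definite. Then for every T > 0 the matrix Riccati terminal value problem P′(t) + P(t)A + AᵀP(t) + CᵀP(t)C + Q − (BᵀP(t) + DᵀP(t)C + S)ᵀ(R + DᵀP(t)D)⁻¹(BᵀP(t) + DᵀP(t)C + S) = 0 for t ∈ [0,T], with P(T) = 0, admits a unique continuously differentiable solution P : [0,T] → (symmetric n×n real matrices) with P(t) positive semi-definite for all t ∈ [0,T]; moreover, denoting by δ > 0 the smallest eigenvalue of R, one has R + DᵀP(t)D ⪰ δI_m for all t ∈ [0,T]. -/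

import Mathlib

open Matrix

/-- Entrywise derivative (within a set) of a matrix-valued function of time. -/
noncomputable def matDerivWithin {n : ℕ} (P : ℝ → Matrix (Fin n) (Fin n) ℝ)
    (s : Set ℝ) (t : ℝ) : Matrix (Fin n) (Fin n) ℝ :=
  Matrix.of fun i j => derivWithin (fun τ => P τ i j) s t

/-- `P` is a continuously differentiable, symmetric, positive semi-definite solution on
`[0, T]` of the Riccati terminal value problem
`P' + PA + AᵀP + CᵀPC + Q - (BᵀP + DᵀPC + S)ᵀ(R + DᵀPD)⁻¹(BᵀP + DᵀPC + S) = 0`,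
`P(T) = 0`. -/
def IsRiccatiPSol {n m : ℕ} (A C : Matrix (Fin n) (Fin n) ℝ)
    (B D : Matrix (Fin n) (Fin m) ℝ) (Q : Matrix (Fin n) (Fin n) ℝ)
    (S : Matrix (Fin m) (Fin n) ℝ) (R : Matrix (Fin m) (Fin m) ℝ)
    (T : ℝ) (P : ℝ → Matrix (Fin n) (Fin n) ℝ) : Prop :=
  (∀ i j, ContDiffOn ℝ 1 (fun t => P t i j) (Set.Icc 0 T)) ∧
  (∀ t ∈ Set.Icc (0:ℝ) T, (P t).IsSymm) ∧
  (∀ t ∈ Set.Icc (0:ℝ) T, (P t).PosSemidef) ∧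
  (∀ t ∈ Set.Icc (0:ℝ) T,
    matDerivWithin P (Set.Icc 0 T) t + P t * A + Aᵀ * P t + Cᵀ * P t * C + Q
      - (Bᵀ * P t + Dᵀ * P t * C + S)ᵀ * (R + Dᵀ * P t * D)⁻¹
          * (Bᵀ * P t + Dᵀ * P t * C + S) = 0) ∧
  P T = 0

section
open scoped Matrix.Norms.Elementwise
open scoped Manifold ContDiff

lemma ric_cutoff {E F : Type*} [NormedAddCommGroup E] [NormedSpace ℝ E] [FiniteDimensional ℝ E]
    [NormedAddCommGroup F] [NormedSpace ℝ F]
    {K U : Set E} (hK : IsCompact K) (hU : IsOpen U) (hKU : K ⊆ U) {f : E → F}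
    (hf : ContDiffOn ℝ 1 f U) :
    ∃ χ : E → ℝ, (∀ x, 0 ≤ χ x) ∧ (∀ x, χ x ≤ 1) ∧ (∀ x ∈ K, χ x = 1) ∧
      (∀ x, x ∉ U → χ x = 0) ∧
      (∃ C, LipschitzWith C (fun x => χ x • f x)) ∧ ∃ M : ℝ, ∀ x, ‖χ x • f x‖ ≤ M := by
  obtain ⟨L, hL, hKL, hLU⟩ := exists_compact_between hK hU hKU
  obtain ⟨χ, h0, h1, h2⟩ := exists_contMDiffMap_zero_one_of_isClosed (n := 1) 𝓘(ℝ, E)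
    (s := (interior L)ᶜ) (t := K) isOpen_interior.isClosed_compl hK.isClosed
    (Set.disjoint_left.2 fun x hx hxK => hx (hKL hxK))
  have hχ : ContDiff ℝ 1 χ := χ.contMDiff.contDiff
  have hzero : ∀ x, x ∉ L → χ x = 0 := fun x hx => h0 (fun h => hx (interior_subset h))
  have hcs : HasCompactSupport (fun x => χ x • f x) :=
    HasCompactSupport.intro hL (fun x hx => by simp [hzero x hx])
  have hcd : ContDiff ℝ 1 (fun x => χ x • f x) := by
    apply contDiff_of_contDiffOn_union_of_isOpen (s := U) (t := Lᶜ)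
    · exact hχ.contDiffOn.smul hf
    · exact (contDiffOn_const (c := (0:F))).congr (fun x hx => by simp [hzero x hx])
    · ext x; by_cases hx : x ∈ L
      · simp [hLU hx]
      · simp [hx]
    · exact hU
    · exact hL.isClosed.isOpen_compl
  refine ⟨χ, fun x => (h2 x).1, fun x => (h2 x).2, fun x hx => h1 hx,
    fun x hx => hzero x (fun h => hx (hLU h)),
    ContDiff.lipschitzWith_of_hasCompactSupport hcs hcd (by simp),
    hcs.exists_bound_of_continuous hcd.continuous⟩

lemma ric_exists {E : Type*} [NormedAddCommGroup E] [NormedSpace ℝ E] [CompleteSpace E]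
    {G : E → E} {C : NNReal} (hG : LipschitzWith C G) {M : ℝ} (hM : ∀ x, ‖G x‖ ≤ M)
    {T : ℝ} (hT : 0 < T) (x₀ : E) : ∃ X : ℝ → E, X 0 = x₀ ∧
      ∀ t ∈ Set.Icc (0:ℝ) T, HasDerivWithinAt X (G (X t)) (Set.Icc 0 T) t := by
  have hM0 : 0 ≤ M := (norm_nonneg _).trans (hM x₀)
  have h : IsPicardLindelof (fun _ : ℝ => G) (tmin := 0) (tmax := T) ⟨0, le_rfl, hT.le⟩ x₀
      (⟨M * T, by positivity⟩ : NNReal) 0 ⟨M, hM0⟩ C :=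
    { lipschitzOnWith := fun t _ => hG.lipschitzOnWith
      continuousOn := fun x _ => continuousOn_const
      norm_le := fun t _ x _ => hM x
      mul_max_le := by simp [hT.le]; exact le_rfl }
  exact h.exists_eq_forall_mem_Icc_hasDerivWithinAt₀

lemma ric_eig {k : ℕ} (hk : 0 < k) {R : Matrix (Fin k) (Fin k) ℝ} (hR : R.PosDef) :
    0 < (⨅ i, hR.1.eigenvalues i) ∧
    (R - (⨅ i, hR.1.eigenvalues i) • (1 : Matrix (Fin k) (Fin k) ℝ)).PosSemidef := by
  have : Nonempty (Fin k) := ⟨⟨0, hk⟩⟩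
  constructor
  · obtain ⟨i, hi⟩ := exists_eq_ciInf_of_finite (f := hR.1.eigenvalues)
    rw [← hi]; exact hR.eigenvalues_pos i
  · set c := ⨅ i, hR.1.eigenvalues i
    have hH : (R - c • (1 : Matrix (Fin k) (Fin k) ℝ)).IsHermitian :=
      hR.1.sub (by simp [Matrix.IsHermitian])
    rw [hH.posSemidef_iff_eigenvalues_nonneg]
    intro i
    have h1 := hH.eigenvalues_mem_spectrum_real i
    have h2 : hH.eigenvalues i + c ∈ spectrum ℝ R := by
      rw [spectrum.add_mem_iff, Algebra.algebraMap_eq_smul_one, neg_add_eq_sub]; exact h1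
    rw [hR.1.spectrum_real_eq_range_eigenvalues] at h2
    obtain ⟨j, hj⟩ := h2
    have : c ≤ hR.1.eigenvalues j := ciInf_le (Set.finite_range _).bddBelow j
    simp only [Pi.zero_apply]; linarith

lemma ric_quad_bound {k : ℕ} (E : Matrix (Fin k) (Fin k) ℝ) (v : Fin k → ℝ) :
    |v ⬝ᵥ (E *ᵥ v)| ≤ (k * ‖E‖) * (v ⬝ᵥ v) := by
  have h1 : ∀ i j, |v i * (E i j * v j)| ≤ ‖E‖ * ((v i * v i + v j * v j) / 2) := by
    intro i j
    have : |E i j| ≤ ‖E‖ := Matrix.norm_entry_le_entrywise_sup_norm E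
    have h2 : |v i| * |v j| ≤ (v i * v i + v j * v j) / 2 := by
      nlinarith [sq_nonneg (|v i| - |v j|), abs_mul_abs_self (v i), abs_mul_abs_self (v j)]
    calc |v i * (E i j * v j)| = |E i j| * (|v i| * |v j|) := by rw [abs_mul, abs_mul]; ring
      _ ≤ _ := mul_le_mul this h2 (by positivity) (norm_nonneg _)
  simp only [dotProduct, mulVec, Finset.mul_sum]
  calc |∑ i, ∑ j, v i * (E i j * v j)| ≤ ∑ i, ∑ j, |v i * (E i j * v j)| :=
        (Finset.abs_sum_le_sum_abs _ _).trans
          (Finset.sum_le_sum fun i _ => Finset.abs_sum_le_sum_abs _ _)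
    _ ≤ ∑ i, ∑ j, ‖E‖ * ((v i * v i + v j * v j) / 2) :=
        Finset.sum_le_sum fun i _ => Finset.sum_le_sum fun j _ => h1 i j
    _ = _ := by
      simp only [← Finset.mul_sum, ← Finset.sum_div, Finset.sum_add_distrib, Finset.sum_const,
        Finset.card_univ, Fintype.card_fin, nsmul_eq_mul]
      have : ∑ x, v x * ((k : ℝ) * v x) = k * ∑ x, v x * v x := by
        rw [Finset.mul_sum]; exact Finset.sum_congr rfl fun x _ => by ring
      rw [this]; ring

lemma ric_norm_le_trace {k : ℕ} {X : Matrix (Fin k) (Fin k) ℝ} (hX : X.PosSemidef) :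
    ‖X‖ ≤ X.trace := by
  have hd : ∀ i, 0 ≤ X i i := fun i => hX.diag_nonneg
  have htr : 0 ≤ X.trace := Finset.sum_nonneg fun i _ => hd i
  have hle : ∀ i, X i i ≤ X.trace := fun i =>
    Finset.single_le_sum (f := fun i => X i i) (fun i _ => hd i) (Finset.mem_univ i)
  rw [Matrix.norm_le_iff htr]
  intro i j
  have hs : X j i = X i j := by simpa using hX.1.apply i j
  have key : ∀ a : ℝ, 0 ≤ X i i + 2 * a * X i j + a * a * X j j := by
    intro a
    have := hX.dotProduct_mulVec_nonneg (Pi.single i 1 + Pi.single j a)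
    simp [mulVec_add, add_dotProduct, hs] at this
    linarith
  rw [Real.norm_eq_abs, abs_le]
  constructor <;> nlinarith [key 1, key (-1), hle i, hle j]

lemma ric_posSemidef_closed {k : ℕ} : IsClosed {X : Matrix (Fin k) (Fin k) ℝ | X.PosSemidef} := by
  have : {X : Matrix (Fin k) (Fin k) ℝ | X.PosSemidef} =
      {X | Xᴴ = X} ∩ ⋂ v : Fin k → ℝ, {X | 0 ≤ star v ⬝ᵥ (X *ᵥ v)} := by
    ext X
    simp [posSemidef_iff_dotProduct_mulVec, Matrix.IsHermitian]
  rw [this]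
  refine IsClosed.inter (isClosed_eq (by fun_prop) continuous_id) (isClosed_iInter fun v => ?_)
  exact isClosed_le continuous_const (by fun_prop)

lemma ric_linbound {E : Type*} [NormedAddCommGroup E] [NormedSpace ℝ E] [FiniteDimensional ℝ E]
    (l : E →ₗ[ℝ] ℝ) : ∃ M : ℝ, 0 ≤ M ∧ ∀ x, |l x| ≤ M * ‖x‖ :=
  ⟨‖l.toContinuousLinearMap‖, norm_nonneg _, fun x => l.toContinuousLinearMap.le_opNorm x⟩

/-- The Riccati right-hand side. -/
noncomputable def ricF {n m : ℕ} (A C : Matrix (Fin n) (Fin n) ℝ)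
    (B D : Matrix (Fin n) (Fin m) ℝ) (Q : Matrix (Fin n) (Fin n) ℝ)
    (S : Matrix (Fin m) (Fin n) ℝ) (R : Matrix (Fin m) (Fin m) ℝ)
    (X : Matrix (Fin n) (Fin n) ℝ) : Matrix (Fin n) (Fin n) ℝ :=
  X * A + Aᵀ * X + Cᵀ * X * C + Q
      - (Bᵀ * X + Dᵀ * X * C + S)ᵀ * (R + Dᵀ * X * D)⁻¹ * (Bᵀ * X + Dᵀ * X * C + S)

section
variable {n m : ℕ} {A C : Matrix (Fin n) (Fin n) ℝ} {B D : Matrix (Fin n) (Fin m) ℝ}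
    {Q : Matrix (Fin n) (Fin n) ℝ} {S : Matrix (Fin m) (Fin n) ℝ}
    {R : Matrix (Fin m) (Fin m) ℝ} {X : Matrix (Fin n) (Fin n) ℝ}

lemma ric_Z (hR : R.PosDef) (hX : X.PosSemidef) : (R + Dᵀ * X * D).PosDef := by
  have := hX.conjTranspose_mul_mul_same D
  rw [conjTranspose_eq_transpose_of_trivial] at this
  exact hR.add_posSemidef this

lemma ric_sym (hQ : Q.IsSymm) (hR : R.PosDef) (hX : X.IsSymm) :
    (ricF A C B D Q S R X).IsSymm := by
  have hR' : Rᵀ = R := by simpa using hR.1.eq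
  have hX' : Xᵀ = X := hX
  have hQ' : Qᵀ = Q := hQ
  unfold Matrix.IsSymm ricF
  simp only [transpose_sub, transpose_add, transpose_mul, transpose_transpose,
    transpose_nonsing_inv, hR', hX', hQ', Matrix.mul_assoc]
  abel

lemma ric_contDiff_mul {E : Type*} [NormedAddCommGroup E] [NormedSpace ℝ E] {a b c : ℕ} {s : Set E}
    {f : E → Matrix (Fin a) (Fin b) ℝ} {g : E → Matrix (Fin b) (Fin c) ℝ}
    (hf : ContDiffOn ℝ 1 f s) (hg : ContDiffOn ℝ 1 g s) :
    ContDiffOn ℝ 1 (fun x => f x * g x) s := by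
  refine contDiffOn_pi.2 fun i => contDiffOn_pi.2 fun j => ?_
  simp only [Matrix.mul_apply]
  exact ContDiffOn.sum fun k _ =>
    (contDiffOn_pi.1 (contDiffOn_pi.1 hf i) k).mul (contDiffOn_pi.1 (contDiffOn_pi.1 hg k) j)

lemma ric_contDiff_transpose {E : Type*} [NormedAddCommGroup E] [NormedSpace ℝ E] {a b : ℕ}
    {s : Set E} {f : E → Matrix (Fin a) (Fin b) ℝ}
    (hf : ContDiffOn ℝ 1 f s) : ContDiffOn ℝ 1 (fun x => (f x)ᵀ) s :=
  contDiffOn_pi.2 fun i => contDiffOn_pi.2 fun j => contDiffOn_pi.1 (contDiffOn_pi.1 hf j) i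

lemma ric_contDiff_det {E : Type*} [NormedAddCommGroup E] [NormedSpace ℝ E] {a : ℕ}
    {s : Set E} {f : E → Matrix (Fin a) (Fin a) ℝ}
    (hf : ContDiffOn ℝ 1 f s) : ContDiffOn ℝ 1 (fun x => (f x).det) s := by
  simp only [Matrix.det_apply]
  refine ContDiffOn.sum fun σ _ => ContDiffOn.const_smul _ ?_
  exact contDiffOn_prod fun i _ => contDiffOn_pi.1 (contDiffOn_pi.1 hf _) _

lemma ric_contDiff_inv {E : Type*} [NormedAddCommGroup E] [NormedSpace ℝ E] {a : ℕ}
    {s : Set E} {f : E → Matrix (Fin a) (Fin a) ℝ}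
    (hf : ContDiffOn ℝ 1 f s) (h : ∀ x ∈ s, (f x).det ≠ 0) :
    ContDiffOn ℝ 1 (fun x => (f x)⁻¹) s := by
  simp only [Matrix.inv_def, Ring.inverse_eq_inv']
  refine ContDiffOn.smul ((ric_contDiff_det hf).inv h) ?_
  refine contDiffOn_pi.2 fun i => contDiffOn_pi.2 fun j => ?_
  simp only [Matrix.adjugate_apply]
  apply ric_contDiff_det
  refine contDiffOn_pi.2 fun i' => contDiffOn_pi.2 fun j' => ?_
  simp only [Matrix.updateRow_apply]
  split_ifs
  · exact contDiffOn_const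
  · exact contDiffOn_pi.1 (contDiffOn_pi.1 hf _) _

lemma ric_contDiffOn :
    ContDiffOn ℝ 1 (ricF A C B D Q S R) {X | (R + Dᵀ * X * D).det ≠ 0} := by
  have hc : ∀ {a b : ℕ} (M : Matrix (Fin a) (Fin b) ℝ),
    ContDiffOn ℝ 1 (fun _ : Matrix (Fin n) (Fin n) ℝ => M) {X | (R + Dᵀ * X * D).det ≠ 0} :=
    fun M => contDiffOn_const
  have hi : ContDiffOn ℝ 1 (fun X : Matrix (Fin n) (Fin n) ℝ => X)
    {X | (R + Dᵀ * X * D).det ≠ 0} := contDiffOn_id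
  have hY := ((ric_contDiff_mul (hc Bᵀ) hi).add
    (ric_contDiff_mul (ric_contDiff_mul (hc Dᵀ) hi) (hc C))).add (hc S)
  have hZ := ric_contDiff_inv ((hc R).add (ric_contDiff_mul (ric_contDiff_mul (hc Dᵀ) hi) (hc D)))
    (fun x hx => hx)
  exact ((((ric_contDiff_mul hi (hc A)).add (ric_contDiff_mul (hc Aᵀ) hi)).add
    (ric_contDiff_mul (ric_contDiff_mul (hc Cᵀ) hi) (hc C))).add (hc Q)).sub
    (ric_contDiff_mul (ric_contDiff_mul (ric_contDiff_transpose hY) hZ) hY)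

lemma ric_id (hR : R.PosDef) (hX : X.PosSemidef) : ∃ K : Matrix (Fin m) (Fin n) ℝ,
    ricF A C B D Q S R X = (A + B * K)ᵀ * X + X * (A + B * K) + (C + D * K)ᵀ * X * (C + D * K)
      + ((Q - Sᵀ * R⁻¹ * S) + (K + R⁻¹ * S)ᵀ * R * (K + R⁻¹ * S)) := by
  have hR' : Rᵀ = R := by simpa using hR.1.eq
  have hX' : Xᵀ = X := by simpa using hX.1.eq
  have hZ := ric_Z (D := D) hR hX
  have hZu : IsUnit (R + Dᵀ * X * D).det := (Matrix.isUnit_iff_isUnit_det _).1 hZ.isUnit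
  have hRu : IsUnit R.det := (Matrix.isUnit_iff_isUnit_det _).1 hR.isUnit
  set Z := R + Dᵀ * X * D with hZdef
  set Y := Bᵀ * X + Dᵀ * X * C + S with hY
  refine ⟨-(Z⁻¹ * Y), ?_⟩
  set K := -(Z⁻¹ * Y) with hK
  have hZK : Z * K = -Y := by
    rw [hK, Matrix.mul_neg, ← Matrix.mul_assoc, Matrix.mul_nonsing_inv _ hZu, Matrix.one_mul]
  have h1 : ricF A C B D Q S R X = X * A + Aᵀ * X + Cᵀ * X * C + Q + Yᵀ * K + Kᵀ * (Y + Z * K) := by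
    rw [hZK, add_neg_cancel, Matrix.mul_zero, add_zero, hK, Matrix.mul_neg, ← Matrix.mul_assoc,
      ← sub_eq_add_neg]
    rfl
  rw [h1, hY, hZdef]
  have e1 : R * (R⁻¹ * S) = S := by rw [← Matrix.mul_assoc, Matrix.mul_nonsing_inv _ hRu, Matrix.one_mul]
  have e2 : ∀ W : Matrix (Fin m) (Fin n) ℝ, R⁻¹ * (R * W) = W := fun W => by
    rw [← Matrix.mul_assoc, Matrix.nonsing_inv_mul _ hRu, Matrix.one_mul]
  clear_value K
  simp only [transpose_add, transpose_mul, transpose_transpose,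
    transpose_nonsing_inv, hR', hX', Matrix.mul_assoc, Matrix.mul_add, Matrix.add_mul, e1, e2]
  abel

lemma ric_lower {w : ℝ} (hw1 : w ≤ 1)
    (hw : (Q - Sᵀ * R⁻¹ * S - w • (1 : Matrix (Fin n) (Fin n) ℝ)).PosSemidef)
    (hR : R.PosDef) (hX : X.PosSemidef) : ∃ κ : ℝ, 0 ≤ κ ∧ ∀ (v : Fin n → ℝ) (h c : ℝ),
      0 ≤ h → 0 ≤ c → c ≤ 1 →
      (h * w - h ^ 2 * κ) * (v ⬝ᵥ v) ≤
       v ⬝ᵥ (X *ᵥ v) + h * (c * (v ⬝ᵥ (ricF A C B D Q S R X *ᵥ v)) + (1 - c) * (v ⬝ᵥ v)) := by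
  obtain ⟨K, hK⟩ := ric_id (A := A) (C := C) (B := B) (D := D) (Q := Q) (S := S) hR hX
  have hX' : Xᵀ = X := by simpa using hX.1.eq
  set M := A + B * K
  set N := C + D * K
  set L := K + R⁻¹ * S
  refine ⟨n * ‖Mᵀ * X * M‖, by positivity, fun v h c hh hc hc1 => ?_⟩
  have q1 := ric_quad_bound (Mᵀ * X * M) v
  have hpos : ∀ u, 0 ≤ u ⬝ᵥ (X *ᵥ u) := fun u => by simpa using hX.dotProduct_mulVec_nonneg u
  have hposR : ∀ u, 0 ≤ u ⬝ᵥ (R *ᵥ u) := fun u => by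
    simpa using hR.posSemidef.dotProduct_mulVec_nonneg u
  have q2 := hw.dotProduct_mulVec_nonneg v
  have conj : ∀ {a : ℕ} (W : Matrix (Fin a) (Fin a) ℝ) (V : Matrix (Fin a) (Fin n) ℝ),
      v ⬝ᵥ ((Vᵀ * W * V) *ᵥ v) = (V *ᵥ v) ⬝ᵥ (W *ᵥ (V *ᵥ v)) := fun W V => by
    rw [Matrix.mul_assoc, ← mulVec_mulVec, dotProduct_mulVec, vecMul_transpose, mulVec_mulVec]
  have q3 := hpos (v + (h * c) • (M *ᵥ v))
  have q4 := hpos (N *ᵥ v)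
  have q5 := hposR (L *ᵥ v)
  have q6 := hpos (M *ᵥ v)
  have hsymm : ∀ u u', u ⬝ᵥ (X *ᵥ u') = u' ⬝ᵥ (X *ᵥ u) := fun u u' => by
    rw [dotProduct_mulVec, ← mulVec_transpose, hX', dotProduct_comm]
  have hF : v ⬝ᵥ (ricF A C B D Q S R X *ᵥ v) = 2 * ((M *ᵥ v) ⬝ᵥ (X *ᵥ v)) +
      (N *ᵥ v) ⬝ᵥ (X *ᵥ (N *ᵥ v)) + v ⬝ᵥ ((Q - Sᵀ * R⁻¹ * S) *ᵥ v) +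
      (L *ᵥ v) ⬝ᵥ (R *ᵥ (L *ᵥ v)) := by
    rw [hK]
    simp only [add_mulVec, dotProduct_add, conj]
    have a1 : v ⬝ᵥ ((Mᵀ * X) *ᵥ v) = (M *ᵥ v) ⬝ᵥ (X *ᵥ v) := by
      rw [← mulVec_mulVec, dotProduct_mulVec, vecMul_transpose]
    have a2 : v ⬝ᵥ ((X * M) *ᵥ v) = (M *ᵥ v) ⬝ᵥ (X *ᵥ v) := by
      rw [← mulVec_mulVec, hsymm]
    rw [a1, a2]; ring
  rw [conj, abs_le] at q1
  have q1' := q1.2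
  simp only [mulVec_add, mulVec_smul, dotProduct_add, add_dotProduct, smul_dotProduct,
    dotProduct_smul, smul_eq_mul, hsymm v (M *ᵥ v)] at q3
  simp only [star_trivial, sub_mulVec, dotProduct_sub, smul_mulVec, one_mulVec, dotProduct_smul,
    smul_eq_mul] at q2
  rw [hF, sub_mulVec, dotProduct_sub]
  have hvv : 0 ≤ v ⬝ᵥ v := Finset.sum_nonneg fun i _ => mul_self_nonneg _
  set vv := v ⬝ᵥ v
  set xx := v ⬝ᵥ (X *ᵥ v)
  set mx := (M *ᵥ v) ⬝ᵥ (X *ᵥ v)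
  set mm := (M *ᵥ v) ⬝ᵥ (X *ᵥ (M *ᵥ v))
  set nn := (N *ᵥ v) ⬝ᵥ (X *ᵥ (N *ᵥ v))
  set ll := (L *ᵥ v) ⬝ᵥ (R *ᵥ (L *ᵥ v))
  set κ := (n : ℝ) * ‖Mᵀ * X * M‖
  set W1 := v ⬝ᵥ (Q *ᵥ v)
  set W2 := v ⬝ᵥ ((Sᵀ * R⁻¹ * S) *ᵥ v)
  have hcc : c ^ 2 ≤ 1 := by nlinarith
  have p1 : 0 ≤ h * c * (W1 - W2 - w * vv) := mul_nonneg (mul_nonneg hh hc) q2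
  have p2 : 0 ≤ h * (1 - c) * ((1 - w) * vv) :=
    mul_nonneg (mul_nonneg hh (by linarith)) (mul_nonneg (by linarith) hvv)
  have p3 : 0 ≤ h * c * (nn + ll) := mul_nonneg (mul_nonneg hh hc) (by linarith)
  have p4 : h ^ 2 * c ^ 2 * mm ≤ h ^ 2 * (κ * vv) := by
    calc h ^ 2 * c ^ 2 * mm ≤ h ^ 2 * 1 * mm := by gcongr
      _ = h ^ 2 * mm := by ring
      _ ≤ _ := by gcongr
  nlinarith

lemma ric_trace (hR : R.PosDef) : ∃ κ q : ℝ, 0 ≤ κ ∧ 0 ≤ q ∧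
    ∀ X : Matrix (Fin n) (Fin n) ℝ, X.PosSemidef → ∀ c : ℝ, 0 ≤ c → c ≤ 1 →
      c * (ricF A C B D Q S R X).trace + (1 - c) * n ≤ κ * X.trace + q := by
  let ℓ : Matrix (Fin n) (Fin n) ℝ →ₗ[ℝ] ℝ :=
    { toFun := fun X => (X * A + Aᵀ * X + Cᵀ * X * C).trace
      map_add' := fun X Y => by
        simp only [Matrix.mul_add, Matrix.add_mul, trace_add]; ring
      map_smul' := fun a X => by
        simp only [Matrix.mul_smul, Matrix.smul_mul, trace_add, trace_smul, smul_eq_mul,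
          RingHom.id_apply]; ring }
  obtain ⟨M, hM0, hM⟩ := ric_linbound ℓ
  refine ⟨M, |Q.trace| + n, hM0, by positivity, fun X hX c hc hc1 => ?_⟩
  have h1 : ℓ X ≤ M * X.trace :=
    (le_abs_self _).trans ((hM X).trans
      (mul_le_mul_of_nonneg_left (ric_norm_le_trace hX) hM0))
  have h2 : 0 ≤ M * X.trace :=
    mul_nonneg hM0 ((norm_nonneg _).trans (ric_norm_le_trace hX))
  have h3 : (ricF A C B D Q S R X).trace ≤ ℓ X + Q.trace := by
    have := ((ric_Z (D := D) hR hX).inv.posSemidef.conjTranspose_mul_mul_same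
      (Bᵀ * X + Dᵀ * X * C + S)).trace_nonneg
    rw [conjTranspose_eq_transpose_of_trivial] at this
    have e : (ricF A C B D Q S R X).trace = ℓ X + Q.trace - ((Bᵀ * X + Dᵀ * X * C + S)ᵀ *
      (R + Dᵀ * X * D)⁻¹ * (Bᵀ * X + Dᵀ * X * C + S)).trace := by
      unfold ricF; rw [trace_sub, trace_add]; rfl
    linarith
  have h4 := le_abs_self Q.trace
  have h5 : (0:ℝ) ≤ n := by positivity
  have h6 : c * (ricF A C B D Q S R X).trace ≤ c * (M * X.trace + |Q.trace|) :=
    mul_le_mul_of_nonneg_left (by linarith) hc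
  have h7 : c * (M * X.trace + |Q.trace|) ≤ 1 * (M * X.trace + |Q.trace|) :=
    mul_le_mul_of_nonneg_right hc1 (by positivity)
  nlinarith

end

section
variable {n m : ℕ} {A C : Matrix (Fin n) (Fin n) ℝ} {B D : Matrix (Fin n) (Fin m) ℝ}
    {Q : Matrix (Fin n) (Fin n) ℝ} {S : Matrix (Fin m) (Fin n) ℝ}
    {R : Matrix (Fin m) (Fin m) ℝ}

lemma ric_field (A C : Matrix (Fin n) (Fin n) ℝ) (B D : Matrix (Fin n) (Fin m) ℝ)
    (S : Matrix (Fin m) (Fin n) ℝ) (hQ : Q.IsSymm) (hR : R.PosDef) (r : ℝ) :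
    ∃ (G : Matrix (Fin n) (Fin n) ℝ → Matrix (Fin n) (Fin n) ℝ)
      (χ : Matrix (Fin n) (Fin n) ℝ → ℝ) (L : NNReal) (M : ℝ),
      LipschitzWith L G ∧ (∀ X, ‖G X‖ ≤ M) ∧ (∀ X, (G X).IsSymm) ∧
      (∀ X, X.IsSymm → G X = χ X • ricF A C B D Q S R X + (1 - χ X) • 1) ∧
      (∀ X, 0 ≤ χ X) ∧ (∀ X, χ X ≤ 1) ∧
      ∀ X, X.PosSemidef → ‖X‖ ≤ r → χ X = 1 := by
  have hU : IsOpen {X : Matrix (Fin n) (Fin n) ℝ | (R + Dᵀ * X * D).det ≠ 0} :=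
    isOpen_ne_fun (by fun_prop) continuous_const
  have hK : IsCompact ({X : Matrix (Fin n) (Fin n) ℝ | X.PosSemidef} ∩ Metric.closedBall 0 r) :=
    (isCompact_closedBall _ _).inter_left ric_posSemidef_closed
  obtain ⟨χ, h0, h1, hχ, -, ⟨L, hL⟩, M, hM⟩ := ric_cutoff hK hU
    (fun X hX => (ric_Z (D := D) hR hX.1).det_pos.ne')
    ((ric_contDiffOn (A := A) (C := C) (B := B) (D := D) (Q := Q) (S := S) (R := R)).sub
      (contDiffOn_const (c := (1 : Matrix (Fin n) (Fin n) ℝ))))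
  let sy : Matrix (Fin n) (Fin n) ℝ → Matrix (Fin n) (Fin n) ℝ := fun X => (1/2 : ℝ) • (X + Xᵀ)
  have hsy : ∀ X, (sy X).IsSymm := fun X => by
    simp only [sy, Matrix.IsSymm, transpose_smul, transpose_add, transpose_transpose, add_comm]
  have hsyl : LipschitzWith 1 sy := by
    refine LipschitzWith.of_dist_le_mul fun X Y => ?_
    rw [dist_eq_norm, dist_eq_norm]
    have e : sy X - sy Y = (1/2 : ℝ) • ((X - Y) + (X - Y)ᵀ) := by
      simp only [sy, transpose_sub, ← smul_sub]; congr 1; abel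
    rw [e, norm_smul]
    have := norm_add_le (X - Y) (X - Y)ᵀ
    rw [Matrix.norm_transpose] at this
    have e2 : ‖(1/2 : ℝ)‖ = 1/2 := by norm_num
    rw [e2, NNReal.coe_one]
    linarith
  refine ⟨fun X => χ (sy X) • (ricF A C B D Q S R (sy X) - 1) + 1, χ, L, M + ‖(1 : Matrix (Fin n) (Fin n) ℝ)‖,
    ?_, ?_, ?_, ?_, h0, h1, ?_⟩
  · have := hL.comp hsyl
    rw [mul_one] at this
    refine LipschitzWith.of_dist_le_mul fun X Y => ?_
    rw [dist_add_right]
    exact this.dist_le_mul X Y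
  · exact fun X => (norm_add_le _ _).trans (add_le_add (hM _) le_rfl)
  · intro X
    have h1 : (ricF A C B D Q S R (sy X)).IsSymm := ric_sym hQ hR (hsy X)
    exact ((h1.sub Matrix.isSymm_one).smul _).add Matrix.isSymm_one
  · intro X hX
    have : sy X = X := by
      simp only [sy, hX.eq]; rw [← two_smul ℝ X, smul_smul]; norm_num
    simp only [this, smul_sub, sub_smul, one_smul]
    abel
  · intro X hX hr
    exact hχ X ⟨hX, by simpa using hr⟩

lemma ric_entry {X : ℝ → Matrix (Fin n) (Fin n) ℝ} {V : Matrix (Fin n) (Fin n) ℝ} {s : Set ℝ} {t : ℝ}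
    (h : HasDerivWithinAt X V s t) (i j : Fin n) :
    HasDerivWithinAt (fun t => X t i j) (V i j) s t :=
  hasDerivWithinAt_pi.1 (hasDerivWithinAt_pi.1 h i) j

lemma ric_psd {T : ℝ}
    {G : Matrix (Fin n) (Fin n) ℝ → Matrix (Fin n) (Fin n) ℝ}
    {χ : Matrix (Fin n) (Fin n) ℝ → ℝ} (hGs : ∀ X, (G X).IsSymm)
    (hG : ∀ X, X.IsSymm → G X = χ X • ricF A C B D Q S R X + (1 - χ X) • 1)
    (h0 : ∀ X, 0 ≤ χ X) (h1 : ∀ X, χ X ≤ 1) {w : ℝ} (hw0 : 0 < w) (hw1 : w ≤ 1)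
    (hw : (Q - Sᵀ * R⁻¹ * S - w • (1 : Matrix (Fin n) (Fin n) ℝ)).PosSemidef)
    (hR : R.PosDef) {X : ℝ → Matrix (Fin n) (Fin n) ℝ} (hX0 : X 0 = 0)
    (hX : ∀ t ∈ Set.Icc (0:ℝ) T, HasDerivWithinAt X (G (X t)) (Set.Icc 0 T) t) :
    ∀ t ∈ Set.Icc (0:ℝ) T, (X t).PosSemidef := by
  have hcont : ContinuousOn X (Set.Icc 0 T) := fun t ht => (hX t ht).continuousWithinAt
  have hici : ∀ t ∈ Set.Ico (0:ℝ) T, HasDerivWithinAt X (G (X t)) (Set.Ici t) t := fun t ht =>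
    (hX t ⟨ht.1, ht.2.le⟩).mono_of_mem_nhdsWithin
      (Filter.mem_of_superset (Icc_mem_nhdsGE ht.2) (Set.Icc_subset_Icc_left ht.1))
  have hsymm : ∀ t ∈ Set.Icc (0:ℝ) T, (X t).IsSymm := by
    intro t ht
    ext i j
    rw [transpose_apply]
    have := constant_of_has_deriv_right_zero (f := fun t => X t j i - X t i j) (a := 0) (b := T)
      (fun t ht => ((ric_entry (hX t ht) j i).sub (ric_entry (hX t ht) i j)).continuousWithinAt)
      (fun t ht => by
        have := (ric_entry (hici t ht) j i).sub (ric_entry (hici t ht) i j)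
        rwa [(hGs (X t)).apply i j, sub_self] at this) t ht
    simp only [hX0, Matrix.zero_apply, sub_self] at this
    linarith
  have main : Set.Icc 0 T ⊆ {t | (X t).PosSemidef} := by
    apply IsClosed.Icc_subset_of_forall_exists_gt
    · rw [Set.inter_comm]
      exact hcont.preimage_isClosed_of_isClosed isClosed_Icc ric_posSemidef_closed
    · simp [hX0, Matrix.PosSemidef.zero]
    · rintro t ⟨htp, ht⟩ y hy
      obtain ⟨κ, hκ, hlow⟩ := ric_lower (A := A) (C := C) (B := B) (D := D) hw1 hw hR htp
      -- little-o estimate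
      have hd := hasDerivWithinAt_iff_isLittleO.1 (hici t ht)
      have hε : 0 < w / (2 * (n + 1)) := by positivity
      have ev1 := (hd.def hε).filter_mono (nhdsWithin_mono t Set.Ioi_subset_Ici_self)
      have hb : t < min (min y T) (t + w / (2 * (κ + 1))) := by
        refine lt_min (lt_min hy ht.2) ?_
        have : 0 < w / (2 * (κ + 1)) := by positivity
        linarith
      have ev2 : ∀ᶠ s in nhdsWithin t (Set.Ioi t), s ∈ Set.Ioo t (min (min y T) (t + w / (2 * (κ + 1)))) :=
        Ioo_mem_nhdsGT hb
      obtain ⟨s, hs1, hs2⟩ := (ev1.and ev2).exists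
      have hsy : s < y := hs2.2.trans_le ((min_le_left _ _).trans (min_le_left _ _))
      have hsT : s < T := hs2.2.trans_le ((min_le_left _ _).trans (min_le_right _ _))
      have hsk : s < t + w / (2 * (κ + 1)) := hs2.2.trans_le (min_le_right _ _)
      have hts : t < s := hs2.1
      refine ⟨s, ?_, hts, hsy.le⟩
      have hsI : s ∈ Set.Icc (0:ℝ) T := ⟨ht.1.trans hts.le, hsT.le⟩
      refine Matrix.PosSemidef.of_dotProduct_mulVec_nonneg ?_ fun v => ?_
      · simpa [Matrix.IsHermitian] using (hsymm s hsI).eq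
      rw [star_trivial]
      set h := s - t with hh
      have hhpos : 0 < h := by simp only [hh]; linarith
      set E := X s - X t - h • G (X t) with hE
      have hXs : X s = X t + h • G (X t) + E := by rw [hE]; abel
      have hEn : ‖E‖ ≤ w / (2 * (n + 1)) * h := by
        have := hs1
        rwa [Real.norm_eq_abs, abs_of_pos hhpos] at this
      have hl := hlow v h (χ (X t)) hhpos.le (h0 _) (h1 _)
      have hq := (abs_le.1 (ric_quad_bound E v)).1
      rw [hXs, hG _ (hsymm t ⟨ht.1, ht.2.le⟩)]
      simp only [add_mulVec, smul_mulVec, dotProduct_add, dotProduct_smul, smul_eq_mul, one_mulVec]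
      have hvv : 0 ≤ v ⬝ᵥ v := Finset.sum_nonneg fun i _ => mul_self_nonneg _
      have c1 : n * ‖E‖ ≤ w / 2 * h := by
        calc n * ‖E‖ ≤ (n + 1) * (w / (2 * (n + 1)) * h) := by gcongr; linarith
          _ = w / 2 * h := by field_simp
      have c2 : h * κ ≤ w / 2 := by
        have : h ≤ w / (2 * (κ + 1)) := by simp only [hh]; linarith
        calc h * κ ≤ w / (2 * (κ + 1)) * (κ + 1) := by gcongr; linarith
          _ = w / 2 := by field_simp
      have c3 : n * ‖E‖ ≤ h * w - h ^ 2 * κ := by nlinarith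
      have c4 := mul_le_mul_of_nonneg_right c3 hvv
      linarith
  exact main

lemma ric_bound {T : ℝ}
    {G : Matrix (Fin n) (Fin n) ℝ → Matrix (Fin n) (Fin n) ℝ}
    {χ : Matrix (Fin n) (Fin n) ℝ → ℝ}
    (hG : ∀ X, X.IsSymm → G X = χ X • ricF A C B D Q S R X + (1 - χ X) • 1)
    (h0 : ∀ X, 0 ≤ χ X) (h1 : ∀ X, χ X ≤ 1) {κ q : ℝ} (hκ : 0 ≤ κ) (hq : 0 ≤ q)
    (hκq : ∀ X : Matrix (Fin n) (Fin n) ℝ, X.PosSemidef → ∀ c : ℝ, 0 ≤ c → c ≤ 1 →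
      c * (ricF A C B D Q S R X).trace + (1 - c) * n ≤ κ * X.trace + q)
    {X : ℝ → Matrix (Fin n) (Fin n) ℝ} (hX0 : X 0 = 0)
    (hX : ∀ t ∈ Set.Icc (0:ℝ) T, HasDerivWithinAt X (G (X t)) (Set.Icc 0 T) t)
    (hpsd : ∀ t ∈ Set.Icc (0:ℝ) T, (X t).PosSemidef) :
    ∀ t ∈ Set.Icc (0:ℝ) T, ‖X t‖ ≤ gronwallBound 0 κ q T := by
  intro t ht
  have hd : ∀ t ∈ Set.Icc (0:ℝ) T,
      HasDerivWithinAt (fun t => (X t).trace) (G (X t)).trace (Set.Icc 0 T) t := fun t ht =>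
    HasDerivWithinAt.fun_sum fun i _ => ric_entry (hX t ht) i i
  have := le_gronwallBound_of_liminf_deriv_right_le (f := fun t => (X t).trace)
    (f' := fun t => (G (X t)).trace) (δ := 0) (K := κ) (ε := q) (a := 0) (b := T)
    (fun t ht => (hd t ht).continuousWithinAt)
    (fun t ht r hr => by
      have h2 : HasDerivWithinAt (fun t => (X t).trace) (G (X t)).trace (Set.Ici t) t :=
        (hd t ⟨ht.1, ht.2.le⟩).mono_of_mem_nhdsWithin
          (Filter.mem_of_superset (Icc_mem_nhdsGE ht.2) (Set.Icc_subset_Icc_left ht.1))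
      simpa [slope] using h2.liminf_right_slope_le hr)
    (by simp [hX0])
    (fun t ht => by
      have hp := hpsd t ⟨ht.1, ht.2.le⟩
      have hs : (X t).IsSymm := by simpa [Matrix.IsHermitian, Matrix.IsSymm] using hp.1
      have := hκq _ hp (χ (X t)) (h0 _) (h1 _)
      simp only [hG _ hs, trace_add, trace_smul, trace_one, Fintype.card_fin, smul_eq_mul]
      exact this) t ht
  refine (ric_norm_le_trace (hpsd t ht)).trans (this.trans ?_)
  rw [sub_zero]
  exact gronwallBound_mono le_rfl hq hκ ht.2

end


section
variable {n m : ℕ} {A C : Matrix (Fin n) (Fin n) ℝ} {B D : Matrix (Fin n) (Fin m) ℝ}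
    {Q : Matrix (Fin n) (Fin n) ℝ} {S : Matrix (Fin m) (Fin n) ℝ}
    {R : Matrix (Fin m) (Fin m) ℝ}

lemma ric_existence (hn : 0 < n)
    (hQ : Q.IsSymm) (hRpd : R.PosDef) (hQS : (Q - Sᵀ * R⁻¹ * S).PosDef)
    (T : ℝ) (hT : 0 < T) :
    ∃ P : ℝ → Matrix (Fin n) (Fin n) ℝ, IsRiccatiPSol A C B D Q S R T P := by
  obtain ⟨hw0, hwp⟩ := ric_eig hn hQS
  set w₀ := ⨅ i, hQS.1.eigenvalues i
  have hw : (Q - Sᵀ * R⁻¹ * S - (min 1 w₀) • (1 : Matrix (Fin n) (Fin n) ℝ)).PosSemidef := by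
    have := hwp.add (Matrix.PosSemidef.one.smul (sub_nonneg.2 (min_le_right 1 w₀)))
    rwa [sub_smul, sub_add_sub_cancel] at this
  obtain ⟨κ, q, hκ, hq, hκq⟩ := ric_trace (A := A) (C := C) (B := B) (D := D) (Q := Q) (S := S) hRpd
  obtain ⟨G, χ, L, M, hGL, hGM, hGs, hG, h0, h1, hχ⟩ :=
    ric_field A C B D S hQ hRpd (gronwallBound 0 κ q T)
  obtain ⟨X, hX0, hX⟩ := ric_exists hGL hGM hT 0
  have hpsd := ric_psd hGs hG h0 h1 (lt_min one_pos hw0) (min_le_left _ _) hw hRpd hX0 hX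
  have hbd := ric_bound hG h0 h1 hκ hq hκq hX0 hX hpsd
  have hsym : ∀ t ∈ Set.Icc (0:ℝ) T, (X t).IsSymm := fun t ht => by
    simpa [Matrix.IsHermitian, Matrix.IsSymm] using (hpsd t ht).1
  have hGF : ∀ t ∈ Set.Icc (0:ℝ) T, G (X t) = ricF A C B D Q S R (X t) := fun t ht => by
    rw [hG _ (hsym t ht), hχ _ (hpsd t ht) (hbd t ht)]; simp
  have hmaps : Set.MapsTo (fun t => T - t) (Set.Icc (0:ℝ) T) (Set.Icc (0:ℝ) T) := fun t ht =>
    ⟨by have := ht.2; linarith, by have := ht.1; linarith⟩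
  have hcont : ContinuousOn X (Set.Icc 0 T) := fun t ht => (hX t ht).continuousWithinAt
  have hder : ∀ t ∈ Set.Icc (0:ℝ) T, ∀ i j,
      HasDerivWithinAt (fun τ => X (T - τ) i j) (-(G (X (T - t)) i j)) (Set.Icc 0 T) t := by
    intro t ht i j
    have := (ric_entry (hX _ (hmaps ht)) i j).scomp t
      ((hasDerivWithinAt_id t (Set.Icc 0 T)).const_sub T) hmaps
    simpa [Function.comp_def] using this
  have hu : UniqueDiffOn ℝ (Set.Icc (0:ℝ) T) := uniqueDiffOn_Icc hT
  refine ⟨fun t => X (T - t), ?_, fun t ht => hsym _ (hmaps ht), fun t ht => hpsd _ (hmaps ht),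
    ?_, by simp [hX0]⟩
  · intro i j
    rw [contDiffOn_one_iff_derivWithin hu]
    refine ⟨fun t ht => (hder t ht i j).differentiableWithinAt, ?_⟩
    have hc : ContinuousOn (fun t => G (X (T - t))) (Set.Icc 0 T) :=
      hGL.continuous.comp_continuousOn (hcont.comp (by fun_prop) hmaps)
    have hc2 : ContinuousOn (fun t => -(G (X (T - t)) i j)) (Set.Icc 0 T) :=
      (continuousOn_pi.1 (continuousOn_pi.1 hc i) j).neg
    exact hc2.congr fun t ht => (hder t ht i j).derivWithin (hu t ht)
  · intro t ht
    have e : matDerivWithin (fun t => X (T - t)) (Set.Icc 0 T) t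
        = -ricF A C B D Q S R (X (T - t)) := by
      rw [← hGF _ (hmaps ht)]
      ext i j
      exact (hder t ht i j).derivWithin (hu t ht)
    rw [e, ricF]
    abel

lemma ric_deriv {T : ℝ} {P : ℝ → Matrix (Fin n) (Fin n) ℝ}
    (hP : IsRiccatiPSol A C B D Q S R T P) {t : ℝ} (ht : t ∈ Set.Icc (0:ℝ) T) :
    HasDerivWithinAt P (-ricF A C B D Q S R (P t)) (Set.Icc 0 T) t := by
  obtain ⟨h1, -, -, h4, -⟩ := hP
  have e : matDerivWithin P (Set.Icc 0 T) t = -ricF A C B D Q S R (P t) := by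
    have := h4 t ht
    rw [eq_neg_iff_add_eq_zero, ← this, ricF]
    abel
  rw [← e]
  exact hasDerivWithinAt_pi.2 fun i => hasDerivWithinAt_pi.2 fun j =>
    (((h1 i j).differentiableOn (by simp)) t ht).hasDerivWithinAt

lemma ric_unique (hQ : Q.IsSymm) (hRpd : R.PosDef) (T : ℝ)
    (P₁ P₂ : ℝ → Matrix (Fin n) (Fin n) ℝ)
    (hP₁ : IsRiccatiPSol A C B D Q S R T P₁) (hP₂ : IsRiccatiPSol A C B D Q S R T P₂) :
    ∀ t ∈ Set.Icc (0:ℝ) T, P₁ t = P₂ t := by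
  have hc : ∀ P, IsRiccatiPSol A C B D Q S R T P → ContinuousOn P (Set.Icc 0 T) :=
    fun P hP t ht => (ric_deriv hP ht).continuousWithinAt
  obtain ⟨r₁, hr₁⟩ := isCompact_Icc.exists_bound_of_continuousOn (hc P₁ hP₁)
  obtain ⟨r₂, hr₂⟩ := isCompact_Icc.exists_bound_of_continuousOn (hc P₂ hP₂)
  obtain ⟨G, χ, L, M, hGL, hGM, hGs, hG, h0, h1, hχ⟩ :=
    ric_field A C B D S hQ hRpd (max r₁ r₂)
  have key : ∀ P, IsRiccatiPSol A C B D Q S R T P → (∀ t ∈ Set.Icc (0:ℝ) T, ‖P t‖ ≤ max r₁ r₂) →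
      ∀ t ∈ Set.Ioc (0:ℝ) T, HasDerivWithinAt P (-G (P t)) (Set.Iic t) t := by
    intro P hP hr t ht
    have ht' : t ∈ Set.Icc (0:ℝ) T := ⟨ht.1.le, ht.2⟩
    have := ric_deriv hP ht'
    have e : G (P t) = ricF A C B D Q S R (P t) := by
      rw [hG _ (hP.2.1 t ht'), hχ _ (hP.2.2.1 t ht') (hr t ht')]; simp
    rw [e]
    exact this.mono_of_mem_nhdsWithin
      (Filter.mem_of_superset (Icc_mem_nhdsLE ht.1) (Set.Icc_subset_Icc_right ht.2))
  exact ODE_solution_unique_of_mem_Icc_left (v := fun _ X => -G X) (s := fun _ => Set.univ) (K := L)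
    (fun t _ => hGL.neg.lipschitzOnWith)
    (hc P₁ hP₁) (key P₁ hP₁ fun t ht => (hr₁ t ht).trans (le_max_left _ _)) (fun _ _ => trivial)
    (hc P₂ hP₂) (key P₂ hP₂ fun t ht => (hr₂ t ht).trans (le_max_right _ _)) (fun _ _ => trivial)
    (hP₁.2.2.2.2.trans hP₂.2.2.2.2.symm)

end

end



/-- if `R > 0` and `Q - SᵀR⁻¹S > 0`, then for every `T > 0` the Riccati
terminal value problem admits a unique continuously differentiable symmetric positive
semi-definite solution `P` on `[0, T]`; moreover, with `δ > 0` the smallest eigenvalue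
of `R`, one has `R + DᵀP(t)D ⪰ δ I` on `[0, T]`. -/
theorem riccati_P_solvability {n m : ℕ} (hn : 0 < n) (hm : 0 < m)
    (A C : Matrix (Fin n) (Fin n) ℝ) (B D : Matrix (Fin n) (Fin m) ℝ)
    (Q : Matrix (Fin n) (Fin n) ℝ) (S : Matrix (Fin m) (Fin n) ℝ)
    (R : Matrix (Fin m) (Fin m) ℝ)
    (hQ : Q.IsSymm) (hRpd : R.PosDef) (hQS : (Q - Sᵀ * R⁻¹ * S).PosDef)
    (T : ℝ) (hT : 0 < T) :
    (∃ P : ℝ → Matrix (Fin n) (Fin n) ℝ, IsRiccatiPSol A C B D Q S R T P ∧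
      (0 < ⨅ i, hRpd.1.eigenvalues i) ∧
      ∀ t ∈ Set.Icc (0:ℝ) T,
        ((R + Dᵀ * P t * D)
            - (⨅ i, hRpd.1.eigenvalues i) • (1 : Matrix (Fin m) (Fin m) ℝ)).PosSemidef)
    ∧ ∀ P₁ P₂ : ℝ → Matrix (Fin n) (Fin n) ℝ,
        IsRiccatiPSol A C B D Q S R T P₁ → IsRiccatiPSol A C B D Q S R T P₂ →
        ∀ t ∈ Set.Icc (0:ℝ) T, P₁ t = P₂ t := by
  refine ⟨?_, fun P₁ P₂ h₁ h₂ => ric_unique hQ hRpd T P₁ P₂ h₁ h₂⟩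
  obtain ⟨P, hP⟩ := ric_existence (A := A) (C := C) (B := B) (D := D) hn hQ hRpd hQS T hT
  obtain ⟨hδ, hpd⟩ := ric_eig hm hRpd
  refine ⟨P, hP, hδ, fun t ht => ?_⟩
  have h2 := (hP.2.2.1 t ht).conjTranspose_mul_mul_same D
  rw [conjTranspose_eq_transpose_of_trivial] at h2
  have h3 := hpd.add h2
  rwa [sub_add_eq_add_sub] at h3
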